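/- arXiv:1706.09130 — 3 statements merged into one kernel-verified Lean document; each statement's English description precedes it below -/
import Mathlib

section
/- Let G = (V,E) be a finite graph, q ≥ 1, E' ⊆ E, and let x = (x_e) and y = (y_e) be strictly positive edge weights with y_e = x_e for e ∉ E' and 0 < y_e < x_e for e ∈ E'. Then there exists a coupling Φ of P_{x,q} and P_{y,q}, i.e. a probability measure Φ on pairs (ω, η) of configurations, such that: (i) the first marginal of Φ is P_{x,q} and the second marginal is P_{y,q}; (ii) Φ(ω ≥ η) = 1; (iii) Φ-almost surely, ω_f = η_f for every edge f both of whose endpoints lie outside C_{E'}(ω). -/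
noncomputable section
open scoped Classical BigOperators

namespace RandomCluster

variable {V : Type*} [Fintype V] [DecidableEq V]

/-- A percolation configuration on the edge set `E`. -/
def Config (E : Finset (Sym2 V)) : Type _ := {e : Sym2 V // e ∈ E} → Bool

instance (E : Finset (Sym2 V)) : Fintype (Config E) := by unfold Config; infer_instance

/-- The set of open edges of a configuration. -/
def openEdges {E : Finset (Sym2 V)} (ω : Config E) : Set (Sym2 V) :=
  {e | ∃ h : e ∈ E, ω ⟨e, h⟩ = true}

/-- `κ(ω)`: the number of connected components of the spanning subgraph of open edges
(isolated vertices included). -/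
def kappa {E : Finset (Sym2 V)} (ω : Config E) : ℕ :=
  Nat.card (SimpleGraph.fromEdgeSet (openEdges ω)).ConnectedComponent

/-- The (unnormalized) random-cluster weight. -/
def weight (E : Finset (Sym2 V)) (x : Sym2 V → ℝ) (q : ℝ) (ω : Config E) : ℝ :=
  q ^ kappa ω * ∏ e : {e : Sym2 V // e ∈ E}, (if ω e then x e.1 else 1)

/-- The partition function. -/
def Z (E : Finset (Sym2 V)) (x : Sym2 V → ℝ) (q : ℝ) : ℝ :=
  ∑ ω : Config E, weight E x q ω

/-- The random-cluster probability measure. -/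
def prob (E : Finset (Sym2 V)) (x : Sym2 V → ℝ) (q : ℝ) (ω : Config E) : ℝ :=
  weight E x q ω / Z E x q

/-- The random-cluster measure conditioned on `{ω : ω e = i}`. -/
def condProb (E : Finset (Sym2 V)) (x : Sym2 V → ℝ) (q : ℝ) (e : {e : Sym2 V // e ∈ E})
    (i : Bool) (ω : Config E) : ℝ :=
  if ω e = i then prob E x q ω / (∑ η : Config E, if η e = i then prob E x q η else 0) else 0

end RandomCluster


/-- `v` lies in `C_{E'}(ω)`: the union of the open clusters of the endpoints of edges of `E'`. -/
def RandomCluster.inClusterOfSet {V : Type*} [Fintype V] [DecidableEq V] {E : Finset (Sym2 V)}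
    (E' : Finset (Sym2 V)) (ω : RandomCluster.Config E) (v : V) : Prop :=
  ∃ e' ∈ E', ∃ u ∈ e',
    (SimpleGraph.fromEdgeSet (RandomCluster.openEdges ω)).Reachable v u

/-!
Reveal the pair `(ω, η)` edge by edge, at each step an edge touching the part of `C_{E'}(ω)` seen so
far. By Holley's criterion the conditional probability that the edge is open is at least as large
for `ω` as for `η`, so its two states can be sampled monotonically. When no such edge remains, all
revealed open edges lie inside `C_{E'}(ω)` and all other edges outside. The weight then factorizes
across the two regions, and `x = y` on the outer one, so the rest of `ω` and of `η` have the same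
conditional law and can be taken equal.
-/

namespace RandomCluster

section Coupling

variable {α β : Type*} [Fintype α] [Fintype β]

/-- The functions `μ` and `ν`, thought of as measures on finite types, have a coupling `Φ` supported
on the relation `R`. No normalization is imposed, so that such functions can be added and scaled. -/
def HasCoupling (R : α → β → Prop) (μ : α → ℝ) (ν : β → ℝ) : Prop :=
  ∃ Φ : α × β → ℝ, (∀ p, 0 ≤ Φ p) ∧ (∀ a, ∑ b, Φ (a, b) = μ a) ∧ (∀ b, ∑ a, Φ (a, b) = ν b) ∧
    ∀ a b, Φ (a, b) ≠ 0 → R a b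

namespace HasCoupling

variable {R R' : α → β → Prop} {μ μ₁ μ₂ : α → ℝ} {ν ν₁ ν₂ : β → ℝ}

lemma mono (h : HasCoupling R μ ν) (hR : ∀ a b, R a b → R' a b) : HasCoupling R' μ ν := by
  obtain ⟨Φ, nonneg, fst, snd, supp⟩ := h
  exact ⟨Φ, nonneg, fst, snd, fun a b hab => hR a b (supp a b hab)⟩

lemma sum_eq_sum (h : HasCoupling R μ ν) : ∑ a, μ a = ∑ b, ν b := by
  obtain ⟨Φ, -, fst, snd, -⟩ := h
  simp only [← fst, ← snd]
  exact Finset.sum_comm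

lemma smul (h : HasCoupling R μ ν) {c : ℝ} (hc : 0 ≤ c) : HasCoupling R (c • μ) (c • ν) := by
  obtain ⟨Φ, nonneg, fst, snd, supp⟩ := h
  refine ⟨c • Φ, fun p => mul_nonneg hc (nonneg p), fun a => ?_, fun b => ?_,
    fun a b hab => supp a b (right_ne_zero_of_mul hab)⟩
  · simp [← Finset.mul_sum, fst]
  · simp [← Finset.mul_sum, snd]

lemma add (h₁ : HasCoupling R μ₁ ν₁) (h₂ : HasCoupling R μ₂ ν₂) :
    HasCoupling R (μ₁ + μ₂) (ν₁ + ν₂) := by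
  obtain ⟨Φ₁, nonneg₁, fst₁, snd₁, supp₁⟩ := h₁
  obtain ⟨Φ₂, nonneg₂, fst₂, snd₂, supp₂⟩ := h₂
  refine ⟨Φ₁ + Φ₂, fun p => add_nonneg (nonneg₁ p) (nonneg₂ p), fun a => ?_, fun b => ?_,
    fun a b hab => ?_⟩
  · simp [Finset.sum_add_distrib, fst₁, fst₂]
  · simp [Finset.sum_add_distrib, snd₁, snd₂]
  · by_cases h : Φ₁ (a, b) = 0
    · exact supp₂ a b fun h' => hab (by simp [h, h'])
    · exact supp₁ a b h

-- Split a uniform variable on `[0, 1]` at the two thresholds `p' ≤ p`.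
lemma mix (h₁₁ : HasCoupling R μ₁ ν₁) (h₁₂ : HasCoupling R μ₁ ν₂) (h₂₂ : HasCoupling R μ₂ ν₂)
    {p p' : ℝ} (hp' : 0 ≤ p') (hpp' : p' ≤ p) (hp : p ≤ 1) :
    HasCoupling R (p • μ₁ + (1 - p) • μ₂) (p' • ν₁ + (1 - p') • ν₂) := by
  convert ((h₁₁.smul hp').add (h₁₂.smul (sub_nonneg.2 hpp'))).add (h₂₂.smul (sub_nonneg.2 hp))
    using 1 <;> module

lemma indicator_of_bijOn {A : Set α} {B : Set β} {T : α → β} (hT : Set.BijOn T A B) (hμ : 0 ≤ μ)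
    (hμν : ∀ a ∈ A, μ a = ν (T a)) :
    HasCoupling (fun a b => a ∈ A ∧ T a = b) (A.indicator μ) (B.indicator ν) := by
  refine ⟨fun p => if p.1 ∈ A ∧ T p.1 = p.2 then μ p.1 else 0, fun p => ?_, fun a => ?_,
    fun b => ?_, fun a b hab => by_contra fun h => hab (if_neg h)⟩
  · dsimp only
    split_ifs
    exacts [hμ p.1, le_rfl]
  · by_cases ha : a ∈ A <;> simp [ha]
  · by_cases hb : b ∈ B
    · obtain ⟨a, ha, rfl⟩ := hT.surjOn hb
      rw [Set.indicator_of_mem hb, ← hμν a ha, Finset.sum_eq_single_of_mem a (Finset.mem_univ a)]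
      · simp [ha]
      · exact fun a' _ hne => if_neg fun h => hne (hT.injOn h.1 ha h.2)
    · rw [Set.indicator_of_notMem hb]
      exact Finset.sum_eq_zero fun a _ => if_neg fun h : a ∈ A ∧ T a = b =>
        hb (h.2 ▸ hT.mapsTo h.1)

end HasCoupling

end Coupling

section ConditionalLaw

variable {α β : Type*}

lemma indicator_eq_inter_add_inter_compl (w : α → ℝ) (A U : Set α) :
    A.indicator w = (A ∩ U).indicator w + (A ∩ Uᶜ).indicator w := by
  ext a
  by_cases hA : a ∈ A <;> by_cases hU : a ∈ U <;> simp [hA, hU]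

variable [Fintype α] [Fintype β] {w : α → ℝ} {A : Set α}

/-- The total `w`-weight of the event `A`. -/
def mass (w : α → ℝ) (A : Set α) : ℝ := ∑ a, A.indicator w a

/-- The probability mass function proportional to `w` on the event `A` and zero off `A`; it is
identically zero when `mass w A = 0`. -/
def condLaw (w : α → ℝ) (A : Set α) : α → ℝ := (mass w A)⁻¹ • A.indicator w

lemma mass_nonneg (hw : 0 ≤ w) (A : Set α) : 0 ≤ mass w A :=
  Finset.sum_nonneg fun a _ => Set.indicator_nonneg (fun a _ => hw a) a

lemma mass_pos (hw : ∀ a, 0 < w a) (hA : A.Nonempty) : 0 < mass w A := by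
  obtain ⟨a, ha⟩ := hA
  refine Finset.sum_pos' (fun a _ => Set.indicator_nonneg (fun a _ => (hw a).le) a)
    ⟨a, Finset.mem_univ a, ?_⟩
  rw [Set.indicator_of_mem ha]
  exact hw a

lemma mass_const_smul (c : ℝ) (w : α → ℝ) (A : Set α) : mass (c • w) A = c * mass w A := by
  rw [mass, mass, Finset.mul_sum]
  exact Finset.sum_congr rfl fun a _ => Set.indicator_const_smul_apply A c w a

lemma mass_eq_inter_add_inter_compl (w : α → ℝ) (A U : Set α) :
    mass w A = mass w (A ∩ U) + mass w (A ∩ Uᶜ) := by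
  simp only [mass, ← Finset.sum_add_distrib, indicator_eq_inter_add_inter_compl w A U, Pi.add_apply]

lemma mass_smul_condLaw (hw : 0 ≤ w) (A : Set α) : mass w A • condLaw w A = A.indicator w := by
  by_cases h : mass w A = 0
  · have hind : 0 ≤ A.indicator w := fun a => Set.indicator_nonneg (fun a _ => hw a) a
    rw [h, zero_smul, (Fintype.sum_eq_zero_iff_of_nonneg hind).1 h]
  · rw [condLaw, smul_inv_smul₀ h]

lemma condLaw_eq_add_inter_compl (hw : 0 ≤ w) (hA : mass w A ≠ 0) (U : Set α) :
    condLaw w A = (mass w (A ∩ U) / mass w A) • condLaw w (A ∩ U) +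
      (1 - mass w (A ∩ U) / mass w A) • condLaw w (A ∩ Uᶜ) := by
  have hcompl : 1 - mass w (A ∩ U) / mass w A = mass w (A ∩ Uᶜ) / mass w A := by
    rw [one_sub_div hA, mass_eq_inter_add_inter_compl w A U, add_sub_cancel_left]
  rw [hcompl, div_eq_inv_mul, div_eq_inv_mul, mul_smul, mul_smul, mass_smul_condLaw hw,
    mass_smul_condLaw hw, ← smul_add, ← indicator_eq_inter_add_inter_compl, condLaw]

lemma HasCoupling.condLaw_of_bijOn {w' : β → ℝ} {B : Set β} {T : α → β} (hT : Set.BijOn T A B)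
    (hw : 0 ≤ w) {c : ℝ} (hc : c ≠ 0) (hww' : ∀ a ∈ A, w a = c * w' (T a)) :
    HasCoupling (fun a b => a ∈ A ∧ T a = b) (condLaw w A) (condLaw w' B) := by
  have hind := HasCoupling.indicator_of_bijOn (ν := c • w') hT hw hww'
  have hmass : mass w A = c * mass w' B := hind.sum_eq_sum.trans (mass_const_smul c w' B)
  have hB : condLaw w' B = (mass w A)⁻¹ • B.indicator (c • w') := by
    rw [condLaw, hmass, show B.indicator (c • w') = c • B.indicator w' from
      Set.indicator_const_smul B c w', smul_smul, mul_inv_rev, inv_mul_cancel_right₀ hc]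
  rw [hB]
  exact hind.smul (inv_nonneg.2 (mass_nonneg hw A))

end ConditionalLaw

section Holley

variable {α : Type*} [DistribLattice α] {w w' : α → ℝ}

/-- Holley's criterion for the measure proportional to `w` to dominate the one proportional
to `w'` stochastically. -/
def HolleyDominates (w w' : α → ℝ) : Prop := ∀ a b, w' a * w b ≤ w' (a ⊓ b) * w (a ⊔ b)

variable [Fintype α]

lemma HolleyDominates.mass_mul_mass_le (h : HolleyDominates w w') (hw : 0 ≤ w) (hw' : 0 ≤ w')
    {A B C D : Set α} (hinf : ∀ a ∈ A, ∀ b ∈ B, a ⊓ b ∈ C) (hsup : ∀ a ∈ A, ∀ b ∈ B, a ⊔ b ∈ D) :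
    mass w' A * mass w B ≤ mass w' C * mass w D := by
  have nonneg : ∀ {v : α → ℝ}, 0 ≤ v → ∀ S : Set α, 0 ≤ S.indicator v :=
    fun hv S a => Set.indicator_nonneg (fun a _ => hv a) a
  refine four_functions_theorem_univ _ _ _ _ (nonneg hw' A) (nonneg hw B) (nonneg hw' C)
    (nonneg hw D) fun a b => ?_
  by_cases hab : a ∈ A ∧ b ∈ B
  · simpa only [Set.indicator_of_mem, hab, hinf a hab.1 b hab.2, hsup a hab.1 b hab.2] using h a b
  · refine le_trans (le_of_eq ?_) (mul_nonneg (nonneg hw' C _) (nonneg hw D _))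
    rcases not_and_or.1 hab with ha | hb
    · rw [Set.indicator_of_notMem ha, zero_mul]
    · rw [Set.indicator_of_notMem hb, mul_zero]

variable {A A' U : Set α}

lemma HolleyDominates.mass_inter_div_le (h : HolleyDominates w w') (hw : 0 ≤ w) (hw' : 0 ≤ w')
    (hA : 0 < mass w A) (hA' : 0 < mass w' A') (hinf : ∀ a ∈ A', ∀ b ∈ A, a ⊓ b ∈ A')
    (hsup : ∀ a ∈ A', ∀ b ∈ A, a ⊔ b ∈ A) (hU : IsUpperSet U) :
    mass w' (A' ∩ U) / mass w' A' ≤ mass w (A ∩ U) / mass w A := by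
  rw [div_le_div_iff₀ hA' hA, mul_comm (mass w (A ∩ U))]
  exact h.mass_mul_mass_le hw hw' (fun a ha b hb => hinf a ha.1 b hb)
    fun a ha b hb => ⟨hsup a ha.1 b hb, hU le_sup_left ha.2⟩

lemma HolleyDominates.hasCoupling_condLaw (h : HolleyDominates w w') (hw : 0 ≤ w) (hw' : 0 ≤ w')
    (hA : 0 < mass w A) (hA' : 0 < mass w' A') (hinf : ∀ a ∈ A', ∀ b ∈ A, a ⊓ b ∈ A')
    (hsup : ∀ a ∈ A', ∀ b ∈ A, a ⊔ b ∈ A) (hU : IsUpperSet U) {R : α → α → Prop}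
    (h₁₁ : HasCoupling R (condLaw w (A ∩ U)) (condLaw w' (A' ∩ U)))
    (h₁₀ : HasCoupling R (condLaw w (A ∩ U)) (condLaw w' (A' ∩ Uᶜ)))
    (h₀₀ : HasCoupling R (condLaw w (A ∩ Uᶜ)) (condLaw w' (A' ∩ Uᶜ))) :
    HasCoupling R (condLaw w A) (condLaw w' A') := by
  rw [condLaw_eq_add_inter_compl hw hA.ne' U, condLaw_eq_add_inter_compl hw' hA'.ne' U]
  refine h₁₁.mix h₁₀ h₀₀ (div_nonneg (mass_nonneg hw' _) hA'.le)
    (h.mass_inter_div_le hw hw' hA hA' hinf hsup hU) ((div_le_one hA).2 ?_)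
  rw [mass_eq_inter_add_inter_compl w A U]
  exact le_add_of_nonneg_right (mass_nonneg hw _)

end Holley

section Cylinder

variable {I : Type*} {S : Finset I} {ξ ζ ω : I → Bool}

/-- The configurations that agree with `ξ` on `S`: `S` is the set of revealed coordinates, and `ξ`
records their states. -/
def cylinder (S : Finset I) (ξ : I → Bool) : Set (I → Bool) := {ω | Set.EqOn ω ξ S}

lemma self_mem_cylinder (S : Finset I) (ξ : I → Bool) : ξ ∈ cylinder S ξ := Set.eqOn_refl ξ S

lemma cylinder_empty (ξ : I → Bool) : cylinder ∅ ξ = Set.univ := by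
  simp [cylinder]

lemma inf_mem_cylinder (hζξ : ζ ≤ ξ) {a b : I → Bool} (ha : a ∈ cylinder S ζ)
    (hb : b ∈ cylinder S ξ) : a ⊓ b ∈ cylinder S ζ := fun f hf => by
  rw [Pi.inf_apply, ha hf, hb hf, inf_eq_left.2 (hζξ f)]

lemma sup_mem_cylinder (hζξ : ζ ≤ ξ) {a b : I → Bool} (ha : a ∈ cylinder S ζ)
    (hb : b ∈ cylinder S ξ) : a ⊔ b ∈ cylinder S ξ := fun f hf => by
  rw [Pi.sup_apply, ha hf, hb hf, sup_eq_right.2 (hζξ f)]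

lemma le_of_mem_cylinder (hξ : ∀ f ∉ S, ξ f = false) (hω : ω ∈ cylinder S ξ) : ξ ≤ ω := fun f => by
  by_cases hf : f ∈ S
  · exact (hω hf).ge
  · rw [hξ f hf]
    exact Bool.false_le _

variable [DecidableEq I]

lemma cylinder_insert_update {f : I} (hf : f ∉ S) (ξ : I → Bool) (b : Bool) :
    cylinder (insert f S) (Function.update ξ f b) = cylinder S ξ ∩ {ω | ω f = b} := by
  have hupdate : Set.EqOn (Function.update ξ f b) ξ S := fun g hg =>
    Function.update_of_ne (ne_of_mem_of_not_mem hg hf) b ξ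
  ext ω
  have hcongr : Set.EqOn ω (Function.update ξ f b) S ↔ Set.EqOn ω ξ S :=
    ⟨fun h => h.trans hupdate, fun h => h.trans hupdate.symm⟩
  simp only [cylinder, Finset.coe_insert, Set.insert_eq, Set.eqOn_union, Set.eqOn_singleton,
    Function.update_self, Set.mem_inter_iff, Set.mem_ofPred_eq, hcongr, and_comm]

lemma piecewise_mem_cylinder (S : Finset I) (ξ ω : I → Bool) :
    S.piecewise ξ ω ∈ cylinder S ξ := fun _ hf =>
  S.piecewise_eq_of_mem ξ ω hf

lemma piecewise_eq_of_mem_cylinder (hω : ω ∈ cylinder S ξ) : S.piecewise ξ ω = ω := by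
  rw [S.piecewise_congr (fun f hf => (hω hf).symm) fun _ _ => rfl, S.piecewise_same]

lemma bijOn_piecewise_cylinder (S : Finset I) (ξ ζ : I → Bool) :
    Set.BijOn (fun ω => S.piecewise ζ ω) (cylinder S ξ) (cylinder S ζ) := by
  refine Set.InvOn.bijOn (f' := fun η => S.piecewise ξ η) ⟨fun ω hω => ?_, fun η hη => ?_⟩
    (fun ω _ => piecewise_mem_cylinder S ζ ω) fun η _ => piecewise_mem_cylinder S ξ η
  · simp only [S.piecewise_idem_right, piecewise_eq_of_mem_cylinder hω]
  · simp only [S.piecewise_idem_right, piecewise_eq_of_mem_cylinder hη]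

lemma piecewise_eq_sup (hξ : ∀ f ∉ S, ξ f = false) (ω : I → Bool) :
    S.piecewise ξ ω = ξ ⊔ S.piecewise ⊥ ω := by
  ext f
  by_cases hf : f ∈ S
  · simp [hf]
  · simp [hf, hξ f hf]

end Cylinder

section Exploration

variable {I : Type*}

/-- The support of the coupling built by exploration: `ω` dominates `η`, and they agree off the
set `t ω` of coordinates explored from `ω`. -/
def LocallyDominates (t : (I → Bool) → Finset I) (ω η : I → Bool) : Prop :=
  η ≤ ω ∧ ∀ f ∉ t ω, ω f = η f

variable [Fintype I] [DecidableEq I] {w w' : (I → Bool) → ℝ} {t : (I → Bool) → Finset I}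

lemma hasCoupling_condLaw_explored (hw : 0 ≤ w) (ht : Monotone t) {ξ ζ : I → Bool}
    (hζξ : ζ ≤ ξ) (hξ : ∀ f ∉ t ξ, ξ f = false)
    (hratio : ∃ c ≠ 0, ∀ ω ∈ cylinder (t ξ) ξ, w ω = c * w' ((t ξ).piecewise ζ ω)) :
    HasCoupling (LocallyDominates t) (condLaw w (cylinder (t ξ) ξ))
      (condLaw w' (cylinder (t ξ) ζ)) := by
  obtain ⟨c, hc, hcw⟩ := hratio
  refine (HasCoupling.condLaw_of_bijOn (bijOn_piecewise_cylinder (t ξ) ξ ζ) hw hc hcw).mono ?_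
  rintro ω _ ⟨hω, rfl⟩
  constructor
  · refine (t ξ).piecewise_le_of_le_of_le ?_ le_rfl
    exact hζξ.trans (le_of_mem_cylinder hξ hω)
  · intro f hf
    have hfξ : f ∉ t ξ := fun h => hf (ht (le_of_mem_cylinder hξ hω) h)
    exact ((t ξ).piecewise_eq_of_notMem ζ ω hfξ).symm

theorem hasCoupling_condLaw_cylinder (hw : ∀ ω, 0 < w ω) (hw' : ∀ ω, 0 < w' ω)
    (hww' : HolleyDominates w w') (ht : Monotone t)
    (hratio : ∀ ξ ζ : I → Bool, ζ ≤ ξ → (∀ f ∉ t ξ, ξ f = false) →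
      ∃ c ≠ 0, ∀ ω ∈ cylinder (t ξ) ξ, w ω = c * w' ((t ξ).piecewise ζ ω))
    (S : Finset I) (ξ ζ : I → Bool) (hζξ : ζ ≤ ξ) (hξ : ∀ f ∉ S, ξ f = false) (hS : S ⊆ t ξ) :
    HasCoupling (LocallyDominates t) (condLaw w (cylinder S ξ)) (condLaw w' (cylinder S ζ)) := by
  induction S using WellFoundedGT.induction generalizing ξ ζ with | ind S ih
  have hw₀ : 0 ≤ w := fun ω => (hw ω).le
  by_cases hSt : t ξ ⊆ S
  · obtain rfl : S = t ξ := hS.antisymm hSt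
    exact hasCoupling_condLaw_explored hw₀ ht hζξ hξ (hratio ξ ζ hζξ hξ)
  obtain ⟨f, hft, hfS⟩ := Finset.not_subset.1 hSt
  have reveal : ∀ b b' : Bool, b' ≤ b → HasCoupling (LocallyDominates t)
      (condLaw w (cylinder S ξ ∩ {ω | ω f = b})) (condLaw w' (cylinder S ζ ∩ {η | η f = b'})) := by
    intro b b' hb
    have hup : ξ ≤ Function.update ξ f b :=
      le_update_self_iff.2 (by rw [hξ f hfS]; exact Bool.false_le b)
    rw [← cylinder_insert_update hfS, ← cylinder_insert_update hfS]
    refine ih _ (Finset.ssubset_insert hfS) _ _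
      (update_le_update_iff.2 ⟨hb, fun g _ => hζξ g⟩) (fun g hg => ?_)
      ((Finset.insert_subset hft hS).trans (ht hup))
    obtain ⟨hgf, hgS⟩ := not_or.1 (Finset.mem_insert.not.1 hg)
    rw [Function.update_of_ne hgf, hξ g hgS]
  have hopen : IsUpperSet {ω : I → Bool | ω f = true} := fun a b hab ha =>
    top_le_iff.1 (ha.symm.le.trans (hab f))
  have hclosed : {ω : I → Bool | ω f = true}ᶜ = {ω | ω f = false} := by
    ext ω
    simp
  refine hww'.hasCoupling_condLaw hw₀ (fun ω => (hw' ω).le)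
    (mass_pos hw ⟨ξ, self_mem_cylinder S ξ⟩) (mass_pos hw' ⟨ζ, self_mem_cylinder S ζ⟩)
    (fun a ha b hb => inf_mem_cylinder hζξ ha hb) (fun a ha b hb => sup_mem_cylinder hζξ ha hb)
    hopen (reveal true true le_rfl) ?_ ?_
  · rw [hclosed]
    exact reveal true false (Bool.false_le true)
  · rw [hclosed]
    exact reveal false false le_rfl

end Exploration

section ConnectedComponents

variable {V : Type*} [Fintype V] {G H : SimpleGraph V}

/-- The space of real functions on the vertices that are constant along the edges of `G`, encoded
as the kernel of the Laplacian. Its dimension counts the connected components of `G`, which turns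
inequalities between numbers of components into linear algebra. -/
def edgeInvariants (G : SimpleGraph V) : Submodule ℝ (V → ℝ) := (G.lapMatrix ℝ).toLin'.ker

lemma mem_edgeInvariants {g : V → ℝ} : g ∈ edgeInvariants G ↔ ∀ u v, G.Adj u v → g u = g v := by
  rw [edgeInvariants, LinearMap.mem_ker, Matrix.toLin'_apply,
    SimpleGraph.lapMatrix_mulVec_eq_zero_iff_forall_adj]

lemma finrank_edgeInvariants (G : SimpleGraph V) :
    Module.finrank ℝ (edgeInvariants G) = Nat.card G.ConnectedComponent := by
  rw [Nat.card_eq_fintype_card, SimpleGraph.card_connectedComponent_eq_finrank_ker_toLin'_lapMatrix,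
    edgeInvariants]

lemma edgeInvariants_sup (G H : SimpleGraph V) :
    edgeInvariants (G ⊔ H) = edgeInvariants G ⊓ edgeInvariants H := by
  ext g
  simp only [Submodule.mem_inf, mem_edgeInvariants, SimpleGraph.sup_adj, or_imp, forall_and]

lemma edgeInvariants_antitone : Antitone (edgeInvariants (V := V)) := fun _ _ hGH _ hg =>
  mem_edgeInvariants.2 fun u v huv => mem_edgeInvariants.1 hg u v (hGH huv)

lemma edgeInvariants_sup_eq_top {A : Set V} (hG : ∀ u v, G.Adj u v → u ∈ A)
    (hH : ∀ u v, H.Adj u v → u ∉ A) : edgeInvariants G ⊔ edgeInvariants H = ⊤ := by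
  refine eq_top_iff.2 fun g _ => Submodule.mem_sup.2
    ⟨Aᶜ.indicator g, ?_, A.indicator g, ?_, A.indicator_compl_add_self g⟩
  · refine mem_edgeInvariants.2 fun u v huv => ?_
    simp [hG u v huv, hG v u huv.symm]
  · refine mem_edgeInvariants.2 fun u v huv => ?_
    simp [hH u v huv, hH v u huv.symm]

lemma card_connectedComponent_add_of_separated {A : Set V} (hG : ∀ u v, G.Adj u v → u ∈ A)
    (hH : ∀ u v, H.Adj u v → u ∉ A) :
    Nat.card G.ConnectedComponent + Nat.card H.ConnectedComponent =
      Fintype.card V + Nat.card (G ⊔ H).ConnectedComponent := by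
  simp only [← finrank_edgeInvariants]
  rw [← Submodule.finrank_sup_add_finrank_inf_eq, edgeInvariants_sup,
    edgeInvariants_sup_eq_top hG hH, finrank_top, Module.finrank_fintype_fun_eq_card]

lemma card_connectedComponent_add_le {V : Type*} [Finite V] (G H : SimpleGraph V) :
    Nat.card G.ConnectedComponent + Nat.card H.ConnectedComponent ≤
      Nat.card (G ⊓ H).ConnectedComponent + Nat.card (G ⊔ H).ConnectedComponent := by
  cases nonempty_fintype V
  simp only [← finrank_edgeInvariants]
  rw [← Submodule.finrank_sup_add_finrank_inf_eq, edgeInvariants_sup]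
  gcongr
  exact Submodule.finrank_mono
    (sup_le (edgeInvariants_antitone inf_le_left) (edgeInvariants_antitone inf_le_right))

end ConnectedComponents

section Weight

variable {V : Type*} {E : Finset (Sym2 V)} {x y : Sym2 V → ℝ} {q : ℝ}

instance (E : Finset (Sym2 V)) : DistribLattice (Config E) :=
  inferInstanceAs (DistribLattice ({e : Sym2 V // e ∈ E} → Bool))

lemma openEdges_mono {a b : Config E} (hab : a ≤ b) : openEdges a ⊆ openEdges b :=
  fun e ⟨he, ha⟩ => ⟨he, top_le_iff.1 (ha.symm.le.trans (hab ⟨e, he⟩))⟩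

lemma openEdges_sup (a b : Config E) : openEdges (a ⊔ b) = openEdges a ∪ openEdges b := by
  ext e
  simp only [openEdges, Set.mem_union, Set.mem_ofPred_eq, ← exists_or]
  exact exists_congr fun he => Bool.or_eq_true_iff

lemma openEdges_inf (a b : Config E) : openEdges (a ⊓ b) = openEdges a ∩ openEdges b := by
  ext e
  constructor
  · rintro ⟨he, hab⟩
    obtain ⟨ha, hb⟩ := Bool.and_eq_true_iff.1 hab
    exact ⟨⟨he, ha⟩, he, hb⟩
  · rintro ⟨⟨he, ha⟩, _, hb⟩
    exact ⟨he, Bool.and_eq_true_iff.2 ⟨ha, hb⟩⟩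

lemma kappa_add_kappa_le [Finite V] (a b : Config E) :
    kappa a + kappa b ≤ kappa (a ⊓ b) + kappa (a ⊔ b) := by
  simp only [kappa, openEdges_inf, openEdges_sup, SimpleGraph.fromEdgeSet_inter,
    SimpleGraph.fromEdgeSet_union]
  exact card_connectedComponent_add_le _ _

lemma kappa_add_kappa_of_separated [Fintype V] {a b : Config E} {A : Set V}
    (ha : ∀ e ∈ openEdges a, ∀ v ∈ e, v ∈ A) (hb : ∀ e ∈ openEdges b, ∀ v ∈ e, v ∉ A) :
    kappa a + kappa b = Fintype.card V + kappa (a ⊔ b) := by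
  simp only [kappa, openEdges_sup, SimpleGraph.fromEdgeSet_union]
  refine card_connectedComponent_add_of_separated (A := A) (fun u v huv => ?_) fun u v huv => ?_
  · exact ha _ ((SimpleGraph.fromEdgeSet_adj _).1 huv).1 u (Sym2.mem_mk_left u v)
  · exact hb _ ((SimpleGraph.fromEdgeSet_adj _).1 huv).1 u (Sym2.mem_mk_left u v)

lemma weight_pos (hq : 0 < q) (hx : ∀ e ∈ E, 0 < x e) (ω : Config E) : 0 < weight E x q ω := by
  refine mul_pos (pow_pos hq _) (Finset.prod_pos fun e _ => ?_)
  split_ifs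
  exacts [hx e e.2, one_pos]

lemma weight_congr {ω : Config E} (h : ∀ e ∈ openEdges ω, x e = y e) :
    weight E x q ω = weight E y q ω := by
  unfold weight
  congr 1
  refine Finset.prod_congr rfl fun e _ => ?_
  split_ifs with he
  exacts [h e ⟨e.2, he⟩, rfl]

lemma weight_mul_weight_of_separated [Fintype V] {a b : Config E} {A : Set V}
    (ha : ∀ e ∈ openEdges a, ∀ v ∈ e, v ∈ A) (hb : ∀ e ∈ openEdges b, ∀ v ∈ e, v ∉ A) :
    weight E x q a * weight E x q b = q ^ Fintype.card V * weight E x q (a ⊔ b) := by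
  unfold weight
  rw [mul_mul_mul_comm, ← pow_add, kappa_add_kappa_of_separated ha hb, pow_add, mul_assoc,
    ← Finset.prod_mul_distrib]
  congr 2
  refine Finset.prod_congr rfl fun e _ => ?_
  have hdisj : ¬(a e = true ∧ b e = true) := fun ⟨hae, hbe⟩ =>
    hb e ⟨e.2, hbe⟩ _ e.1.out_fst_mem (ha e ⟨e.2, hae⟩ _ e.1.out_fst_mem)
  change _ = if (a e || b e) = true then x e else 1
  cases hae : a e <;> cases hbe : b e <;> simp_all

lemma weight_holleyDominates [Finite V] (hq : 1 ≤ q) (hy : ∀ e ∈ E, 0 < y e)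
    (hyx : ∀ e ∈ E, y e ≤ x e) :
    HolleyDominates (weight E x q) (weight E y q) := by
  intro a b
  have hx : ∀ e ∈ E, 0 < x e := fun e he => (hy e he).trans_le (hyx e he)
  have nonneg : ∀ {z : Sym2 V → ℝ}, (∀ e ∈ E, 0 < z e) → ∀ (ω : Config E) (e : {e // e ∈ E}),
      0 ≤ if ω e = true then z e else 1 := by
    intro z hz ω e
    split_ifs
    exacts [(hz e e.2).le, zero_le_one]
  unfold weight
  rw [mul_mul_mul_comm, mul_mul_mul_comm (q ^ kappa (a ⊓ b)), ← pow_add, ← pow_add,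
    ← Finset.prod_mul_distrib, ← Finset.prod_mul_distrib]
  refine mul_le_mul (pow_le_pow_right₀ hq (kappa_add_kappa_le a b)) ?_
    (Finset.prod_nonneg fun e _ => mul_nonneg (nonneg hy a e) (nonneg hx b e))
    (pow_nonneg (zero_le_one.trans hq) _)
  refine Finset.prod_le_prod (fun e _ => mul_nonneg (nonneg hy a e) (nonneg hx b e)) fun e _ => ?_
  change _ ≤ (if (a e && b e) = true then y e else 1) * if (a e || b e) = true then x e else 1
  cases a e <;> cases b e <;> simp [hyx e e.2]

lemma prob_eq_condLaw [DecidableEq V] (E : Finset (Sym2 V)) (x : Sym2 V → ℝ) (q : ℝ) :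
    prob E x q = condLaw (weight E x q) Set.univ := by
  ext ω
  simp only [prob, Z, condLaw, mass, Set.indicator_univ, Pi.smul_apply, smul_eq_mul]
  exact div_eq_inv_mul _ _

lemma sum_prob [DecidableEq V] (hq : 0 < q) (hx : ∀ e ∈ E, 0 < x e) :
    ∑ ω : Config E, prob E x q ω = 1 := by
  have hZ : 0 < Z E x q :=
    Finset.sum_pos (fun ω _ => weight_pos hq hx ω) ⟨fun _ => false, Finset.mem_univ _⟩
  simp only [prob, ← Finset.sum_div]
  exact div_self hZ.ne'

end Weight

section RandomClusterCoupling

variable {V : Type*} [Fintype V] [DecidableEq V] {E E' : Finset (Sym2 V)}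
  {x y : Sym2 V → ℝ} {q : ℝ}

/-- The edges with an endpoint in `C_{E'}(ω)`, where the coupled configurations may differ. -/
def touchedEdges (E' : Finset (Sym2 V)) (ω : Config E) : Finset {e : Sym2 V // e ∈ E} :=
  {f | ∃ v ∈ f.1, inClusterOfSet E' ω v}

lemma mem_touchedEdges {ω : Config E} {f : {e : Sym2 V // e ∈ E}} :
    f ∈ touchedEdges E' ω ↔ ∃ v ∈ f.1, inClusterOfSet E' ω v := by
  simp [touchedEdges]

lemma mem_touchedEdges_of_mem (ω : Config E) {f : {e : Sym2 V // e ∈ E}} (hf : f.1 ∈ E') :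
    f ∈ touchedEdges E' ω :=
  mem_touchedEdges.2 ⟨_, f.1.out_fst_mem, f, hf, _, f.1.out_fst_mem, .rfl⟩

lemma touchedEdges_monotone (E' : Finset (Sym2 V)) : Monotone (touchedEdges (E := E) E') := by
  intro a b hab f hf
  obtain ⟨v, hv, e', he', u, hu, hvu⟩ := mem_touchedEdges.1 hf
  exact mem_touchedEdges.2
    ⟨v, hv, e', he', u, hu, hvu.mono (SimpleGraph.fromEdgeSet_mono (openEdges_mono hab))⟩

lemma inClusterOfSet_of_mem_openEdges {ω : Config E} {e : Sym2 V} (he : e ∈ openEdges ω) {u v : V}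
    (hu : u ∈ e) (hv : v ∈ e) (huC : inClusterOfSet E' ω u) : inClusterOfSet E' ω v := by
  obtain ⟨e', he', z, hz, huz⟩ := huC
  refine ⟨e', he', z, hz, ?_⟩
  rcases eq_or_ne v u with rfl | hvu
  · exact huz
  · have hadj : (SimpleGraph.fromEdgeSet (openEdges ω)).Adj v u :=
      (SimpleGraph.fromEdgeSet_adj _).2 ⟨(Sym2.mem_and_mem_iff hvu).1 ⟨hv, hu⟩ ▸ he, hvu⟩
    exact hadj.reachable.trans huz

lemma inClusterOfSet_of_open {ω : Config E} (hω : ∀ f ∉ touchedEdges E' ω, ω f = false)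
    {e : Sym2 V} (he : e ∈ openEdges ω) {v : V} (hv : v ∈ e) : inClusterOfSet E' ω v := by
  have htouched : ⟨e, he.1⟩ ∈ touchedEdges E' ω := by
    by_contra h
    exact Bool.false_ne_true ((hω _ h).symm.trans he.2)
  obtain ⟨u, hu, huC⟩ := mem_touchedEdges.1 htouched
  exact inClusterOfSet_of_mem_openEdges he hu hv huC

lemma exists_weight_eq_mul_weight_piecewise (hq : 0 < q) (hx : ∀ e ∈ E, 0 < x e)
    (hy : ∀ e ∈ E, 0 < y e) (hoff : ∀ e ∈ E, e ∉ E' → y e = x e) {ξ ζ : Config E} (hζξ : ζ ≤ ξ)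
    (hξ : ∀ f ∉ touchedEdges E' ξ, ξ f = false) :
    ∃ c ≠ 0, ∀ ω ∈ cylinder (touchedEdges E' ξ) ξ,
      weight E x q ω = c * weight E y q ((touchedEdges E' ξ).piecewise ζ ω) := by
  set S := touchedEdges E' ξ
  have hζ : ∀ f ∉ S, ζ f = false := fun f hf => le_bot_iff.1 ((hζξ f).trans (hξ f hf).le)
  have inside : ∀ e ∈ openEdges ξ, ∀ v ∈ e, v ∈ {v | inClusterOfSet E' ξ v} :=
    fun e he v hv => inClusterOfSet_of_open hξ he hv
  refine ⟨weight E x q ξ / weight E y q ζ,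
    div_ne_zero (weight_pos hq hx ξ).ne' (weight_pos hq hy ζ).ne', fun ω hω => ?_⟩
  let ρ : Config E := S.piecewise ⊥ ω
  have notMem_of_open : ∀ e (he : e ∈ openEdges ρ), ⟨e, he.1⟩ ∉ S := by
    rintro e ⟨heE, he⟩ heS
    simp [ρ, heS] at he
  have outside : ∀ e ∈ openEdges ρ, ∀ v ∈ e, v ∉ {v | inClusterOfSet E' ξ v} :=
    fun e he v hv hvC => notMem_of_open e he (mem_touchedEdges.2 ⟨v, hv, hvC⟩)
  have weight_ρ : weight E x q ρ = weight E y q ρ := weight_congr fun e he =>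
    (hoff e he.1 fun heE' => notMem_of_open e he (mem_touchedEdges_of_mem ξ heE')).symm
  have weight_ω : weight E x q ξ * weight E x q ρ = q ^ Fintype.card V * weight E x q ω := by
    rw [weight_mul_weight_of_separated inside outside]
    congr 2
    exact (piecewise_eq_sup hξ ω).symm.trans (piecewise_eq_of_mem_cylinder hω)
  have weight_η : weight E y q ζ * weight E y q ρ =
      q ^ Fintype.card V * weight E y q (S.piecewise ζ ω) := by
    rw [weight_mul_weight_of_separated (fun e he => inside e (openEdges_mono hζξ he)) outside]
    congr 2
    exact (piecewise_eq_sup hζ ω).symm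
  rw [div_mul_eq_mul_div, eq_div_iff (weight_pos hq hy ζ).ne']
  apply mul_left_cancel₀ (pow_pos hq (Fintype.card V)).ne'
  linear_combination weight E x q ξ * weight_η - weight E y q ζ * weight_ω +
    weight E x q ξ * weight E y q ζ * weight_ρ

theorem hasCoupling_prob (hq : 1 ≤ q) (hy : ∀ e ∈ E, 0 < y e) (hyx : ∀ e ∈ E, y e ≤ x e)
    (hoff : ∀ e ∈ E, e ∉ E' → y e = x e) :
    HasCoupling (LocallyDominates (touchedEdges E')) (prob E x q) (prob E y q) := by
  have hq₀ : 0 < q := zero_lt_one.trans_le hq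
  have hx : ∀ e ∈ E, 0 < x e := fun e he => (hy e he).trans_le (hyx e he)
  have hcylinder := hasCoupling_condLaw_cylinder (weight_pos hq₀ hx) (weight_pos hq₀ hy)
    (weight_holleyDominates hq hy hyx) (touchedEdges_monotone E')
    (fun ξ ζ => exists_weight_eq_mul_weight_piecewise hq₀ hx hy hoff)
    ∅ ⊥ ⊥ le_rfl (fun _ _ => rfl) (Finset.empty_subset _)
  rw [cylinder_empty] at hcylinder
  rw [prob_eq_condLaw, prob_eq_condLaw]
  exact hcylinder

end RandomClusterCoupling

end RandomCluster

theorem stmt1 {V : Type*} [Fintype V] [DecidableEq V] (E E' : Finset (Sym2 V))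
    (hE' : E' ⊆ E) (x y : Sym2 V → ℝ) (q : ℝ) (hq : 1 ≤ q)
    (hx : ∀ e ∈ E, 0 < x e)
    (hy_off : ∀ e ∈ E, e ∉ E' → y e = x e)
    (hy_on : ∀ e ∈ E', 0 < y e ∧ y e < x e) :
    ∃ Φ : RandomCluster.Config E × RandomCluster.Config E → ℝ,
      (∀ p, 0 ≤ Φ p) ∧
      -- (i) the marginals of Φ are P_{x,q} and P_{y,q}
      (∀ ω : RandomCluster.Config E,
        ∑ η : RandomCluster.Config E, Φ (ω, η) = RandomCluster.prob E x q ω) ∧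
      (∀ η : RandomCluster.Config E,
        ∑ ω : RandomCluster.Config E, Φ (ω, η) = RandomCluster.prob E y q η) ∧
      -- (ii) Φ(ω ≥ η) = 1
      (∑ p : RandomCluster.Config E × RandomCluster.Config E,
          (if ∀ f, p.2 f ≤ p.1 f then Φ p else 0)) = 1 ∧
      -- (iii) Φ-a.s., ω and η agree on every edge whose endpoints both lie outside C_{E'}(ω)
      (∀ ω η : RandomCluster.Config E, Φ (ω, η) ≠ 0 →
        ∀ f : {e : Sym2 V // e ∈ E},
          (∀ v ∈ f.1, ¬ RandomCluster.inClusterOfSet E' ω v) → ω f = η f) := by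
  have hy : ∀ e ∈ E, 0 < y e := fun e he =>
    if h : e ∈ E' then (hy_on e h).1 else hy_off e he h ▸ hx e he
  have hyx : ∀ e ∈ E, y e ≤ x e := fun e he =>
    if h : e ∈ E' then (hy_on e h).2.le else (hy_off e he h).le
  obtain ⟨Φ, nonneg, fst, snd, supp⟩ := RandomCluster.hasCoupling_prob hq hy hyx hy_off
  refine ⟨Φ, nonneg, fst, snd, ?_, fun ω η hωη f hf => (supp ω η hωη).2 f ?_⟩
  · have ite_eq : ∀ p : RandomCluster.Config E × RandomCluster.Config E,
        (if ∀ f, p.2 f ≤ p.1 f then Φ p else 0) = Φ p :=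
      fun p => ite_eq_left_iff.2 fun hp => by_contra fun h => hp (supp p.1 p.2 (Ne.symm h)).1
    calc _ = ∑ p, Φ p := Finset.sum_congr rfl fun p _ => ite_eq p
      _ = ∑ ω, ∑ η, Φ (ω, η) := Fintype.sum_prod_type Φ
      _ = ∑ ω, RandomCluster.prob E x q ω := Finset.sum_congr rfl fun ω _ => fst ω
      _ = 1 := RandomCluster.sum_prob (zero_lt_one.trans_le hq) hx
  · intro hmem
    obtain ⟨v, hv, hvC⟩ := RandomCluster.mem_touchedEdges.1 hmem
    exact hf v hv hvC
end
end

section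
/- Fix n ≥ 1, b_L ∈ B_L, a word 𝐱 ∈ 𝒜^n and b_R ∈ B_R, and regard b_L, x_1, …, x_n, b_R as occupying positions 0, 1, …, n+1. Let A ⊆ 𝓘_n be the event that the stick-percolation configuration induced by the memory configuration I has at least two clusters and that the sum of the lengths of the first and last clusters is strictly less than n+2. Then the exact factorization identity holds: Σ_{I ∈ A} Ψ_n(b_L ⊔ 𝐱 ⊔ b_R, I) = Σ ρ_L(first block) · (∏_{j=1}^k 𝐩(j-th middle block)) · ρ_R(last block), where the sum on the right runs over all k ≥ 1 and all decompositions of the positions {0, …, n+1} into k+2 consecutive blocks of lengths l, l_1, …, l_k, r with l, r, l_1, …, l_k ≥ 1 and l + l_1 + ⋯ + l_k + r = n+2, the first block being b_L together with the first l−1 letters of 𝐱, the middle blocks being the corresponding consecutive subwords of 𝐱, and the last block being the last r−1 letters of 𝐱 together with b_R. -/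
noncomputable section
open scoped Classical BigOperators

namespace Renewal

variable {A BL BR : Type*}

/-- The multiplicative extension of the kernel `Ψ` to words. -/
def psiExt (ψ : BL × List A → A ⊕ BR → ℝ) (b : BL × List A) : List A ⊕ BR → ℝ
  | Sum.inl z => ∏ k : Fin z.length, ψ (b.1, b.2 ++ z.take k.1) (Sum.inl (z.get k))
  | Sum.inr r => ψ b (Sum.inr r)

/-- `a_k(s | y)`: the infimum of `Ψ(s | ·)` over all left contexts ending with the last `k`
letters of the word `y`. -/
def aW (ψ : BL × List A → A ⊕ BR → ℝ) (y : List A) (k : ℕ) (s : A ⊕ BR) : ℝ :=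
  ⨅ l : BL × List A, ψ (l.1, l.2 ++ y.drop (y.length - k)) s

/-- `a_k(s | b_L ⊔ y)`, with the convention `a_k = Ψ(s | b_L ⊔ y)` for `k > |y|`. -/
def aCtx (ψ : BL × List A → A ⊕ BR → ℝ) (bL : BL) (y : List A) (k : ℕ) (s : A ⊕ BR) : ℝ :=
  if k ≤ y.length then aW ψ y k s else ψ (bL, y) s

/-- `Δ_k(s | y)` (pure word context). -/
def dW (ψ : BL × List A → A ⊕ BR → ℝ) (y : List A) : ℕ → A ⊕ BR → ℝ
  | 0, s => aW ψ y 0 s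
  | k + 1, s => aW ψ y (k + 1) s - aW ψ y k s

/-- `Δ_k(s | b_L ⊔ y)`. -/
def dCtx (ψ : BL × List A → A ⊕ BR → ℝ) (bL : BL) (y : List A) : ℕ → A ⊕ BR → ℝ
  | 0, s => aCtx ψ bL y 0 s
  | k + 1, s => aCtx ψ bL y (k + 1) s - aCtx ψ bL y k s

/-- Memory configurations over the positions `0, …, P-1`: `I k ≤ k`. -/
def Mem (P : ℕ) : Type _ := ∀ k : Fin P, Fin (k.1 + 1)

instance (P : ℕ) : Fintype (Mem P) := by unfold Mem; infer_instance

/-- The value of a memory configuration, as a function `ℕ → ℕ`. -/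
def memVal {P : ℕ} (I : Mem P) (k : ℕ) : ℕ := if h : k < P then (I ⟨k, h⟩).1 else 0

/-- The edge `(j, j+1)` is a cut of the stick configuration induced by `I` on the
positions `0, …, P-1`: no stick `(m - I m - 1/2, m + 1/2)` covers the point `j + 1/2`. -/
def cutAt (P : ℕ) (I : ℕ → ℕ) (j : ℕ) : Prop :=
  ∀ m, j < m → m < P → I m + j + 1 ≤ m

variable (w : BL → ℝ) (ψ : BL × List A → A ⊕ BR → ℝ)

/-- `Ψ_n(b_L ⊔ 𝐱 ⊔ b_R)`. -/
def psiSeq (bL : BL) (x : List A) (bR : BR) : ℝ :=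
  w bL * (∏ k : Fin x.length, ψ (bL, x.take k.1) (Sum.inl (x.get k))) *
    ψ (bL, x) (Sum.inr bR)

/-- `Ψ_n(b_L ⊔ 𝐱 ⊔ b_R, I)`: the weight of the sequence together with a memory
configuration `I` over the positions `0, …, n+1`. -/
def memW (bL : BL) (x : List A) (bR : BR) (I : ℕ → ℕ) : ℝ :=
  w bL * (∏ k : Fin x.length, dCtx ψ bL (x.take k.1) (I (k.1 + 1)) (Sum.inl (x.get k))) *
    dCtx ψ bL x (I (x.length + 1)) (Sum.inr bR)

/-- `ρ_L(b_L ⊔ 𝐱)`: sum over memory configurations forming a single cluster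
over the positions `0, …, |𝐱|`. -/
def rhoL (bL : BL) (x : List A) : ℝ :=
  w bL * ∑ I : Mem (x.length + 1),
    if ∀ j, j < x.length → ¬ cutAt (x.length + 1) (memVal I) j then
      ∏ k : Fin x.length, dCtx ψ bL (x.take k.1) (memVal I (k.1 + 1)) (Sum.inl (x.get k))
    else 0

/-- `𝐩(𝐱)`: sum over memory configurations with clusters `(1, |𝐱|)` over the
positions `0, …, |𝐱|`. -/
def pW (x : List A) : ℝ :=
  ∑ I : Mem (x.length + 1),
    if cutAt (x.length + 1) (memVal I) 0 ∧
        (∀ j, 0 < j → j < x.length → ¬ cutAt (x.length + 1) (memVal I) j) then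
      ∏ k : Fin x.length, dW ψ (x.take k.1) (memVal I (k.1 + 1)) (Sum.inl (x.get k))
    else 0

/-- `ρ_R(𝐱 ⊔ b_R)`: sum over memory configurations with clusters `(1, |𝐱|+1)` over the
positions `0, …, |𝐱|+1`. -/
def rhoR (x : List A) (bR : BR) : ℝ :=
  ∑ I : Mem (x.length + 2),
    if cutAt (x.length + 2) (memVal I) 0 ∧
        (∀ j, 0 < j → j < x.length + 1 → ¬ cutAt (x.length + 2) (memVal I) j) then
      (∏ k : Fin x.length, dW ψ (x.take k.1) (memVal I (k.1 + 1)) (Sum.inl (x.get k))) *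
        dW ψ x (memVal I (x.length + 1)) (Sum.inr bR)
    else 0

/-- `μ_n`: the total mass of `Ψ_n`. -/
def mu (n : ℕ) : ℝ :=
  ∑' bL : BL, ∑' bR : BR, ∑' x : {x : List A // x.length = n}, psiSeq w ψ bL x.1 bR

/-- `Ψ_n(B)` for an event `B` on pairs (sequence, memory configuration). -/
def psiEvent (n : ℕ) (P : BL → List A → BR → (ℕ → ℕ) → Prop) : ℝ :=
  ∑' bL : BL, ∑' bR : BR, ∑' x : {x : List A // x.length = n},
    ∑ I : Mem (n + 2), if P bL x.1 bR (memVal I) then memW w ψ bL x.1 bR (memVal I) else 0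

end Renewal

namespace Renewal

/-- The set of cut edges `j ∈ {0, …, n}` of the stick configuration induced by `I`
on the positions `0, …, n+1`. -/
noncomputable def cutFinset (n : ℕ) (I : ℕ → ℕ) : Finset ℕ :=
  (Finset.range (n + 1)).filter fun j => cutAt (n + 2) I j

/-- The number of clusters of the induced stick configuration. -/
noncomputable def numClusters (n : ℕ) (I : ℕ → ℕ) : ℕ := (cutFinset n I).card + 1

/-- The length of the first (leftmost) cluster. -/
noncomputable def firstClusterLen (n : ℕ) (I : ℕ → ℕ) : ℕ :=
  if h : (cutFinset n I).Nonempty then (cutFinset n I).min' h + 1 else n + 2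

/-- The length of the last (rightmost) cluster. -/
noncomputable def lastClusterLen (n : ℕ) (I : ℕ → ℕ) : ℕ :=
  if h : (cutFinset n I).Nonempty then n + 1 - (cutFinset n I).max' h else 0

end Renewal

/-!
The event says exactly that `I` has at least three clusters. No stick crosses a cut, so a memory
configuration with a cut after position `a` is a pair of configurations, one on each side. The
symbols right of the cut do not remember anything left of it, and `Δ_i(s | ·)` with `i` at most
the length of a word depends on that word only: the weight of `I` is the product of the weights of
the two sides, and the right factor is the weight of a word without left boundary. Cutting after
the first cluster gives a renewal equation for the total weight of the configurations with at
least `c` clusters. The sums over decompositions into blocks satisfy the same recursion when the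
first block is split off.
-/

namespace Renewal

section Gluing

variable {a b P j : ℕ}

lemma memVal_of_lt (I : Mem P) {k : ℕ} (hk : k < P) : memVal I k = I ⟨k, hk⟩ := dif_pos hk

lemma memVal_of_le (I : Mem P) {k : ℕ} (hk : P ≤ k) : memVal I k = 0 := dif_neg hk.not_gt

lemma memVal_le (I : Mem P) (k : ℕ) : memVal I k ≤ k := by
  obtain hk | hk := lt_or_ge k P
  · exact memVal_of_lt I hk ▸ Nat.le_of_lt_succ (I ⟨k, hk⟩).isLt
  · exact memVal_of_le I hk ▸ Nat.zero_le k

lemma Mem.ext {I J : Mem P} (h : ∀ k < P, memVal I k = memVal J k) : I = J := by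
  funext k
  simpa only [memVal_of_lt _ k.isLt, Fin.val_inj] using h k k.isLt

/-- Juxtaposition of two memory configurations: `I` on the first `a` positions and `J`, shifted
by `a`, on the remaining ones. The total number `P` of positions is a free argument, so that it
need not be syntactically `a + b`. -/
def glue (P : ℕ) (I : Mem a) (J : Mem b) : Mem P := fun k =>
  ⟨if k < a then memVal I k else memVal J (k - a), by
    have hI := memVal_le I k
    have hJ := memVal_le J (k - a)
    split_ifs <;> omega⟩

lemma memVal_glue_of_lt (hP : a + b = P) (I : Mem a) (J : Mem b) {k : ℕ} (hk : k < a) :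
    memVal (glue P I J) k = memVal I k := by
  rw [memVal_of_lt _ (by omega)]
  exact if_pos hk

lemma memVal_glue_add (hP : a + b = P) (I : Mem a) (J : Mem b) (k : ℕ) :
    memVal (glue P I J) (a + k) = memVal J k := by
  obtain hk | hk := lt_or_ge k b
  · rw [memVal_of_lt _ (by omega)]
    simp [glue]
  · rw [memVal_of_le _ (by omega), memVal_of_le _ hk]

lemma cutAt_glue_of_lt (hP : a + b = P) (I : Mem a) (J : Mem b) (hj : j < a) :
    cutAt P (memVal (glue P I J)) j ↔ cutAt a (memVal I) j := by
  constructor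
  · intro h m hjm hma
    simpa only [memVal_glue_of_lt hP I J hma] using h m hjm (by omega)
  · intro h m hjm hmP
    obtain hma | ham := lt_or_ge m a
    · simpa only [memVal_glue_of_lt hP I J hma] using h m hjm hma
    · obtain ⟨k, rfl⟩ := Nat.exists_eq_add_of_le ham
      have hJ := memVal_le J k
      rw [memVal_glue_add hP]
      omega

lemma cutAt_glue_add (hP : a + b = P) (I : Mem a) (J : Mem b) :
    cutAt P (memVal (glue P I J)) (a + j) ↔ cutAt b (memVal J) j := by
  constructor
  · intro h m hjm hmb
    have := h (a + m) (by omega) (by omega)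
    rw [memVal_glue_add hP] at this
    omega
  · intro h m hjm hmP
    obtain ⟨k, rfl⟩ := Nat.exists_eq_add_of_le (show a ≤ m by omega)
    have := h k (by omega) (by omega)
    rw [memVal_glue_add hP]
    omega

lemma cutAt_of_le (I : ℕ → ℕ) (h : P ≤ j + 1) : cutAt P I j := fun _ _ _ => by omega

lemma glue_injective (hP : a + b = P) :
    Function.Injective fun IJ : Mem a × Mem b => glue P IJ.1 IJ.2 := by
  rintro ⟨I, J⟩ ⟨I', J'⟩ h
  have hval (k : ℕ) : memVal (glue P I J) k = memVal (glue P I' J') k :=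
    congrArg (memVal · k) h
  refine Prod.ext (Mem.ext fun k hk => ?_) (Mem.ext fun k _ => ?_)
  · simpa only [memVal_glue_of_lt hP _ _ hk] using hval k
  · simpa only [memVal_glue_add hP] using hval (a + k)

/-- No stick from the right half reaches back over the cut, so that half is a configuration. -/
lemma mem_range_glue_iff (hP : a + 1 + b = P) (I : Mem P) :
    I ∈ Set.range (fun IJ : Mem (a + 1) × Mem b => glue P IJ.1 IJ.2) ↔
      cutAt P (memVal I) a := by
  constructor
  · rintro ⟨⟨J, K⟩, rfl⟩
    exact (cutAt_glue_of_lt hP J K a.lt_succ_self).2 (cutAt_of_le _ le_rfl)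
  · intro hcut
    let J : Mem (a + 1) := fun k => ⟨memVal I k, Nat.lt_succ_of_le (memVal_le I k)⟩
    let K : Mem b := fun k => ⟨memVal I (a + 1 + k), by
      have := hcut (a + 1 + k) (by omega) (by omega)
      omega⟩
    refine ⟨(J, K), Mem.ext fun k hk => ?_⟩
    obtain hka | hak := lt_or_ge k (a + 1)
    · rw [memVal_glue_of_lt hP J K hka, memVal_of_lt J hka]
    · obtain ⟨i, rfl⟩ := Nat.exists_eq_add_of_le hak
      rw [memVal_glue_add hP, memVal_of_lt K (by omega)]

lemma sum_ite_cutAt {R : Type*} [AddCommMonoid R] (hP : a + 1 + b = P) (F : Mem P → R) :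
    (∑ I : Mem P, if cutAt P (memVal I) a then F I else 0) =
      ∑ I : Mem (a + 1), ∑ J : Mem b, F (glue P I J) := by
  rw [← Fintype.sum_prod_type' fun I J => F (glue P I J)]
  refine (Fintype.sum_of_injective _ (glue_injective hP) _ _ (fun I hI => ?_) fun IJ => ?_).symm
  · exact if_neg (mt (mem_range_glue_iff hP I).2 hI)
  · exact (if_pos ((mem_range_glue_iff hP _).1 ⟨IJ, rfl⟩)).symm

end Gluing

section Clusters

variable {a b P : ℕ}

/-- The number of clusters induced by `I` on the positions `0, …, P - 1`, counted by their last
positions: `cutAt P I (P - 1)` holds vacuously, so the last cluster is counted too. -/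
def clusterCount (P : ℕ) (I : ℕ → ℕ) : ℕ := Nat.count (cutAt P I) P

/-- `I` induces a single cluster on the positions `0, …, P - 1`. -/
def IsCluster (P : ℕ) (I : ℕ → ℕ) : Prop := ∀ j, j + 1 < P → ¬ cutAt P I j

lemma clusterCount_zero (I : ℕ → ℕ) : clusterCount 0 I = 0 := Nat.count_zero _

lemma clusterCount_succ (I : ℕ → ℕ) :
    clusterCount (P + 1) I = Nat.count (cutAt (P + 1) I) P + 1 := by
  rw [clusterCount, Nat.count_succ, if_pos (cutAt_of_le I le_rfl)]

lemma IsCluster.clusterCount_eq_one {I : ℕ → ℕ} (hI : IsCluster (P + 1) I) :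
    clusterCount (P + 1) I = 1 := by
  rw [clusterCount_succ, Nat.count_iff_forall_not.2 fun j hj => hI j (by omega)]

lemma clusterCount_glue (hP : a + b = P) (I : Mem a) (J : Mem b) :
    clusterCount P (memVal (glue P I J)) =
      clusterCount a (memVal I) + clusterCount b (memVal J) := by
  rw [clusterCount, ← hP, Nat.count_add, hP]
  simp only [cutAt_glue_add hP, clusterCount, Nat.count_eq_card_filter_range]
  congr 2
  exact Finset.filter_congr fun j hj => cutAt_glue_of_lt hP I J (Finset.mem_range.1 hj)

lemma three_le_clusterCount_iff (n : ℕ) (I : ℕ → ℕ) :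
    3 ≤ clusterCount (n + 2) I ↔
      2 ≤ numClusters n I ∧ firstClusterLen n I + lastClusterLen n I < n + 2 := by
  have hcount : clusterCount (n + 2) I = (cutFinset n I).card + 1 := by
    rw [clusterCount_succ, Nat.count_eq_card_filter_range, cutFinset]
  rw [hcount, numClusters]
  obtain hempty | hne := (cutFinset n I).eq_empty_or_nonempty
  · simp [hempty]
  have hmin := Finset.min'_le _ _ (Finset.max'_mem _ hne)
  have hmax : (cutFinset n I).max' hne < n + 1 :=
    Finset.mem_range.1 (Finset.mem_of_mem_filter _ (Finset.max'_mem _ hne))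
  have hcard : 1 < (cutFinset n I).card ↔ (cutFinset n I).min' hne < (cutFinset n I).max' hne :=
    ⟨(cutFinset n I).min'_lt_max'_of_card, fun h =>
      Finset.one_lt_card.2 ⟨_, Finset.min'_mem _ hne, _, Finset.max'_mem _ hne, h.ne⟩⟩
  rw [firstClusterLen, lastClusterLen, dif_pos hne, dif_pos hne]
  omega

end Clusters

section RenewalEquation

variable {R : Type*} [CommSemiring R] {a b P c : ℕ} {g h : ℕ → ℕ → R}

/-- The weight of a memory configuration, where `g k i` is the weight of memory `i` at
position `k`. -/
def memProd (g : ℕ → ℕ → R) (P : ℕ) (I : ℕ → ℕ) : R := ∏ k ∈ Finset.range P, g k (I k)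

/-- The total weight of the configurations on `P` positions that form a single cluster. -/
def clusterSum (g : ℕ → ℕ → R) (P : ℕ) : R :=
  ∑ I : Mem P, if IsCluster P (memVal I) then memProd g P (memVal I) else 0

/-- The total weight of the configurations on `P` positions with at least `c` clusters. -/
def sumClustersGE (g : ℕ → ℕ → R) (c P : ℕ) : R :=
  ∑ I : Mem P, if c ≤ clusterCount P (memVal I) then memProd g P (memVal I) else 0

lemma memProd_congr (hgh : ∀ k < P, ∀ i ≤ k, g k i = h k i) (I : Mem P) :
    memProd g P (memVal I) = memProd h P (memVal I) :=
  Finset.prod_congr rfl fun k hk => hgh k (Finset.mem_range.1 hk) _ (memVal_le I k)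

lemma sumClustersGE_congr (hgh : ∀ k < P, ∀ i ≤ k, g k i = h k i) :
    sumClustersGE g c P = sumClustersGE h c P := by
  simp only [sumClustersGE, memProd_congr hgh]

lemma memProd_glue (g : ℕ → ℕ → R) (hP : a + b = P) (I : Mem a) (J : Mem b) :
    memProd g P (memVal (glue P I J)) =
      memProd g a (memVal I) * memProd (fun k => g (a + k)) b (memVal J) := by
  rw [memProd, ← hP, Finset.prod_range_add, hP]
  simp only [memVal_glue_add hP, memProd]
  congr 1
  refine Finset.prod_congr rfl fun k hk => ?_
  rw [memVal_glue_of_lt hP I J (Finset.mem_range.1 hk)]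

lemma sum_ite_firstCut (hP : 0 < P) (I : ℕ → ℕ) (r : R) :
    (∑ a ∈ Finset.range P, if cutAt P I a ∧ ∀ j < a, ¬ cutAt P I j then r else 0) = r := by
  have hex : ∃ a, cutAt P I a := ⟨P - 1, cutAt_of_le I (by omega)⟩
  have hlt : Nat.find hex < P :=
    (Nat.find_min' hex (cutAt_of_le I (by omega))).trans_lt (Nat.sub_one_lt_of_lt hP)
  simp only [← Nat.find_eq_iff hex, Finset.sum_ite_eq, Finset.mem_range, hlt, if_true]

lemma sum_ite_firstCut_eq (hP : a + 1 + b = P) (F : Mem P → R) :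
    (∑ I : Mem P, if cutAt P (memVal I) a ∧ (∀ j < a, ¬ cutAt P (memVal I) j) then F I else 0) =
      ∑ I : Mem (a + 1), ∑ J : Mem b,
        if IsCluster (a + 1) (memVal I) then F (glue P I J) else 0 := by
  simp only [ite_and]
  rw [sum_ite_cutAt hP]
  refine Finset.sum_congr rfl fun I _ => Finset.sum_congr rfl fun J _ => if_congr ?_ rfl rfl
  refine forall_congr' fun j => ?_
  rw [Nat.add_lt_add_iff_right]
  exact imp_congr_right fun hj => not_congr (cutAt_glue_of_lt hP I J (by omega))

/-- The renewal equation: decompose according to the length `a + 1` of the first cluster. -/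
theorem sumClustersGE_succ (g : ℕ → ℕ → R) (c P : ℕ) :
    sumClustersGE g (c + 1) P = ∑ a ∈ Finset.range P,
      clusterSum g (a + 1) * sumClustersGE (fun k => g (a + 1 + k)) c (P - (a + 1)) := by
  obtain rfl | hP := P.eq_zero_or_pos
  · simp [sumClustersGE, clusterCount_zero]
  rw [sumClustersGE, Finset.sum_congr rfl fun I _ => (sum_ite_firstCut hP (memVal I) _).symm,
    Finset.sum_comm]
  refine Finset.sum_congr rfl fun a ha => ?_
  have hsplit : a + 1 + (P - (a + 1)) = P := Nat.add_sub_of_le (Finset.mem_range.1 ha)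
  rw [sum_ite_firstCut_eq hsplit, clusterSum, sumClustersGE, Finset.sum_mul_sum]
  refine Finset.sum_congr rfl fun I _ => Finset.sum_congr rfl fun J _ => ?_
  by_cases hI : IsCluster (a + 1) (memVal I)
  · rw [if_pos hI, if_pos hI, clusterCount_glue hsplit, hI.clusterCount_eq_one,
      memProd_glue g hsplit, mul_ite, mul_zero]
    exact if_congr (by omega) rfl rfl
  · rw [if_neg hI, if_neg hI, zero_mul]

lemma sumClustersGE_zero_right (g : ℕ → ℕ → R) (c : ℕ) :
    sumClustersGE g c 0 = if c = 0 then 1 else 0 := by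
  have : Unique (Mem 0) := inferInstanceAs (Unique (∀ k : Fin 0, Fin (k.1 + 1)))
  simp [sumClustersGE, clusterCount_zero, memProd]

lemma sumClustersGE_one (g : ℕ → ℕ → R) (P : ℕ) :
    sumClustersGE g 1 (P + 1) = sumClustersGE g 0 (P + 1) := by
  simp [sumClustersGE, clusterCount_succ]

/-- Turns the events `I ∼ (1, n)` and `I ∼ (1, n + 1)` in the definitions of `𝐩` and `ρ_R` into
single clusters, by deleting position `0`. -/
lemma sum_isolated_zero (g : ℕ → ℕ → R) (P : ℕ) :
    (∑ I : Mem (P + 1), if cutAt (P + 1) (memVal I) 0 ∧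
        (∀ j, 0 < j → j < P → ¬ cutAt (P + 1) (memVal I) j) then
      ∏ k ∈ Finset.range P, g k (memVal I (k + 1)) else 0) = clusterSum g P := by
  have hP : 0 + 1 + P = P + 1 := by omega
  have : Subsingleton (Mem (0 + 1)) := ⟨fun I J => Mem.ext fun k hk => by
    have hI := memVal_le I k
    have hJ := memVal_le J k
    omega⟩
  let I₀ : Mem (0 + 1) := fun _ => 0
  simp only [ite_and]
  rw [sum_ite_cutAt hP, Fintype.sum_subsingleton _ I₀, clusterSum]
  refine Finset.sum_congr rfl fun J _ => if_congr ?_ ?_ rfl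
  · constructor
    · exact fun h j hj hcut => h (0 + 1 + j) (by omega) (by omega) ((cutAt_glue_add hP _ J).2 hcut)
    · intro h j hj hjP
      obtain ⟨i, rfl⟩ := Nat.exists_eq_add_of_le (show 0 + 1 ≤ j from hj)
      exact mt (cutAt_glue_add hP _ J).1 (h i (by omega))
  · refine Finset.prod_congr rfl fun k _ => ?_
    rw [show k + 1 = 0 + 1 + k by omega, memVal_glue_add hP]

end RenewalEquation

section WordWeights

variable {A BL BR : Type*} {k i : ℕ}
variable (w : BL → ℝ) (ψ : BL × List A → A ⊕ BR → ℝ) (bL : BL) (u v y : List A) (bR : BR)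

/-- The symbol in position `k` of the sequence `y ⊔ b_R`. -/
def symbolAt (y : List A) (bR : BR) (k : ℕ) : A ⊕ BR := (y[k]?).elim (Sum.inr bR) Sum.inl

/-- The weight `Δ_i(s | y_1^k)` of memory `i` at position `k` of `y ⊔ b_R`, for a word `y` without
left boundary; `s` is the symbol in that position. -/
def wordWeight (k i : ℕ) : ℝ := dW ψ (y.take k) i (symbolAt y bR k)

/-- The weight of memory `i` at position `k` of `b_L ⊔ y ⊔ b_R`; position `0` carries `Ψ(b_L)`. -/
def boundaryWeight : ℕ → ℕ → ℝ
  | 0, _ => w bL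
  | k + 1, i => dCtx ψ bL (y.take k) i (symbolAt y bR k)

lemma symbolAt_length : symbolAt y bR y.length = Sum.inr bR := by simp [symbolAt]

lemma symbolAt_append_add : symbolAt (u ++ v) bR (u.length + k) = symbolAt v bR k := by
  simp [symbolAt, List.getElem?_append_right]

lemma prod_symbolAt_append (f : List A → ℕ → A ⊕ BR → ℝ) :
    ∏ k ∈ Finset.range u.length, f ((u ++ v).take k) k (symbolAt (u ++ v) bR k) =
      ∏ k : Fin u.length, f (u.take k) k (Sum.inl (u.get k)) := by
  rw [Finset.prod_range]
  refine Finset.prod_congr rfl fun k _ => ?_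
  rw [List.take_append_of_le_length k.isLt.le, symbolAt, List.getElem?_append_left k.isLt]
  simp

variable {v y}

lemma aW_append (hi : i ≤ v.length) (s : A ⊕ BR) : aW ψ (u ++ v) i s = aW ψ v i s := by
  rw [aW, aW, List.length_append, Nat.add_sub_assoc hi, List.drop_length_add_append]

lemma dW_append (hi : i ≤ v.length) (s : A ⊕ BR) : dW ψ (u ++ v) i s = dW ψ v i s := by
  cases i with
  | zero => exact aW_append ψ u hi s
  | succ i => rw [dW, dW, aW_append ψ u hi, aW_append ψ u (Nat.le_of_succ_le hi)]

lemma dCtx_eq_dW (hi : i ≤ y.length) (s : A ⊕ BR) : dCtx ψ bL y i s = dW ψ y i s := by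
  cases i with
  | zero => simp [dCtx, dW, aCtx]
  | succ i => simp [dCtx, dW, aCtx, hi, Nat.le_of_succ_le hi]

lemma wordWeight_append_add (hk : k ≤ v.length) (hi : i ≤ k) :
    wordWeight ψ (u ++ v) bR (u.length + k) i = wordWeight ψ v bR k i := by
  rw [wordWeight, wordWeight, List.take_length_add_append, symbolAt_append_add, dW_append]
  simpa [hk] using hi

lemma boundaryWeight_succ (hk : k ≤ y.length) (hi : i ≤ k) :
    boundaryWeight w ψ bL y bR (k + 1) i = wordWeight ψ y bR k i :=
  dCtx_eq_dW ψ bL (by simpa [hk] using hi) _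

variable (v y)

lemma clusterSum_wordWeight_append :
    clusterSum (wordWeight ψ (u ++ v) bR) u.length = pW ψ u := by
  rw [← sum_isolated_zero, pW]
  refine Finset.sum_congr rfl fun I _ => if_congr Iff.rfl ?_ rfl
  exact prod_symbolAt_append u v bR fun z k s => dW ψ z (memVal I (k + 1)) s

lemma clusterSum_wordWeight :
    clusterSum (wordWeight ψ y bR) (y.length + 1) = rhoR ψ y bR := by
  rw [← sum_isolated_zero, rhoR]
  refine Finset.sum_congr rfl fun I _ => if_congr Iff.rfl ?_ rfl
  have hprod := prod_symbolAt_append y [] bR fun z k s => dW ψ z (memVal I (k + 1)) s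
  rw [List.append_nil] at hprod
  rw [Finset.prod_range_succ, ← hprod, wordWeight, symbolAt_length, List.take_length]
  rfl

lemma memProd_boundaryWeight_append (I : ℕ → ℕ) :
    memProd (boundaryWeight w ψ bL (u ++ v) bR) (u.length + 1) I =
      w bL * ∏ k : Fin u.length, dCtx ψ bL (u.take k) (I (k + 1)) (Sum.inl (u.get k)) := by
  rw [memProd, Finset.prod_range_succ', mul_comm]
  exact congrArg (w bL * ·) (prod_symbolAt_append u v bR fun z k s => dCtx ψ bL z (I (k + 1)) s)

lemma clusterSum_boundaryWeight_append :
    clusterSum (boundaryWeight w ψ bL (u ++ v) bR) (u.length + 1) = rhoL w ψ bL u := by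
  rw [rhoL, Finset.mul_sum]
  refine Finset.sum_congr rfl fun I _ => ?_
  rw [mul_ite, mul_zero, memProd_boundaryWeight_append]
  exact if_congr (forall_congr' fun j => by rw [Nat.add_lt_add_iff_right]) rfl rfl

lemma memProd_boundaryWeight (I : ℕ → ℕ) :
    memProd (boundaryWeight w ψ bL y bR) (y.length + 2) I = memW w ψ bL y bR I := by
  have hprod := memProd_boundaryWeight_append w ψ bL y [] bR I
  rw [List.append_nil, memProd] at hprod
  rw [memProd, Finset.prod_range_succ, hprod, memW, boundaryWeight, symbolAt_length,
    List.take_length]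

/-- The total weight of the configurations on `y ⊔ b_R` with at least `c` clusters. -/
def wordSumGE (c : ℕ) (y : List A) : ℝ := sumClustersGE (wordWeight ψ y bR) c (y.length + 1)

lemma wordSumGE_one (y : List A) : wordSumGE ψ bR 1 y = wordSumGE ψ bR 0 y :=
  sumClustersGE_one _ _

theorem wordSumGE_succ (c : ℕ) (y : List A) :
    wordSumGE ψ bR (c + 1) y =
      (if c = 0 then rhoR ψ y bR else 0) +
        ∑ a : Fin y.length, pW ψ (y.take (a + 1)) * wordSumGE ψ bR c (y.drop (a + 1)) := by
  rw [wordSumGE, sumClustersGE_succ, Finset.sum_range_succ, add_comm, Finset.sum_range]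
  congr 1
  · rw [clusterSum_wordWeight, Nat.sub_self, sumClustersGE_zero_right, mul_ite, mul_one, mul_zero]
  refine Finset.sum_congr rfl fun a _ => ?_
  obtain ⟨u, v, hy, hu⟩ : ∃ u v, u ++ v = y ∧ u.length = a + 1 :=
    ⟨y.take (a + 1), y.drop (a + 1), List.take_append_drop _ y, by simp⟩
  have htail : y.length + 1 - u.length = v.length + 1 := by
    rw [← hy, List.length_append]
    omega
  rw [← hu, htail, ← hy, List.take_left, List.drop_left, clusterSum_wordWeight_append, wordSumGE]
  congr 1
  exact sumClustersGE_congr fun k hk i hi =>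
    wordWeight_append_add ψ u bR (Nat.le_of_lt_succ hk) hi

theorem sumClustersGE_boundaryWeight_succ (c : ℕ) (x : List A) :
    sumClustersGE (boundaryWeight w ψ bL x bR) (c + 2) (x.length + 2) =
      ∑ a : Fin (x.length + 1),
        rhoL w ψ bL (x.take a) * wordSumGE ψ bR (c + 1) (x.drop a) := by
  rw [sumClustersGE_succ, Finset.sum_range_succ, Nat.sub_self, sumClustersGE_zero_right,
    if_neg c.succ_ne_zero, mul_zero, add_zero, Finset.sum_range]
  refine Finset.sum_congr rfl fun a _ => ?_
  obtain ⟨u, v, hx, hu⟩ : ∃ u v, u ++ v = x ∧ u.length = a :=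
    ⟨x.take a, x.drop a, List.take_append_drop _ x,
      List.length_take_of_le (Nat.le_of_lt_succ a.isLt)⟩
  have htail : x.length + 2 - (u.length + 1) = v.length + 1 := by
    rw [← hx, List.length_append]
    omega
  rw [← hu, htail, ← hx, List.take_left, List.drop_left, clusterSum_boundaryWeight_append,
    wordSumGE]
  congr 1
  refine sumClustersGE_congr fun k hk i hi => ?_
  have hkv : k ≤ v.length := Nat.le_of_lt_succ hk
  rw [Nat.add_right_comm, boundaryWeight_succ, wordWeight_append_add ψ u bR hkv hi]
  · simpa using hkv
  · omega

end WordWeights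

section Splittings

variable {A BL BR : Type*} {c : ℕ} {x y : List A}

/-- The ways of writing a word as a concatenation of at least `c` nonempty middle blocks and a,
possibly empty, last block. -/
abbrev Splitting (c : ℕ) (y : List A) : Type _ :=
  {d : List (List A) × List A // y = d.1.flatten ++ d.2 ∧ c ≤ d.1.length ∧ ∀ m ∈ d.1, m ≠ []}

/-- The ways of writing a word as a concatenation of a, possibly empty, first block, of at least
one nonempty middle block, and of a, possibly empty, last block. -/
abbrev BoundarySplitting (x : List A) : Type _ :=
  {d : List A × List (List A) × List A //
    x = d.1 ++ d.2.1.flatten ++ d.2.2 ∧ d.2.1 ≠ [] ∧ ∀ m ∈ d.2.1, m ≠ []}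

/-- The splitting of `y` whose first middle block consists of the first `a + 1` letters of `y`. -/
def consSplitting (p : Σ a : Fin y.length, Splitting c (y.drop (a + 1))) : Splitting (c + 1) y :=
  ⟨(y.take (p.1 + 1) :: p.2.1.1, p.2.1.2), by
    obtain ⟨hflat, hlen, hne⟩ := p.2.2
    refine ⟨?_, Nat.succ_le_succ hlen, List.forall_mem_cons.2 ⟨?_, hne⟩⟩
    · rw [List.flatten_cons, List.append_assoc, ← hflat, List.take_append_drop]
    · exact List.ne_nil_of_length_pos (by simp)⟩

lemma consSplitting_bijective :
    Function.Bijective (consSplitting : _ → Splitting (c + 1) y) := by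
  constructor
  · rintro ⟨a, d⟩ ⟨a', d'⟩ h
    simp only [consSplitting, Subtype.mk.injEq, Prod.mk.injEq, List.cons.injEq] at h
    obtain ⟨⟨htake, hmid⟩, hlast⟩ := h
    obtain rfl : a = a' := by
      have := congrArg List.length htake
      simp only [List.length_take] at this
      omega
    exact congrArg _ (Subtype.ext (Prod.ext hmid hlast))
  · rintro ⟨⟨_ | ⟨m, ms⟩, r⟩, hflat, hlen, hne⟩
    · exact absurd hlen (Nat.not_succ_le_zero c)
    obtain ⟨hm, hms⟩ := List.forall_mem_cons.1 hne
    have hpos := List.length_pos_iff.2 hm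
    have hsub : m.length - 1 + 1 = m.length := Nat.sub_add_cancel hpos
    rw [List.flatten_cons, List.append_assoc] at hflat
    subst hflat
    refine ⟨⟨⟨m.length - 1, by simp; omega⟩, (ms, r), ?_, Nat.le_of_succ_le_succ hlen, hms⟩, ?_⟩
    · simp [hsub]
    · simp [consSplitting, hsub]

/-- The splitting of `y` without middle blocks (`none`), and those with at least one. -/
def optionSplitting : Option (Splitting 1 y) → Splitting 0 y
  | none => ⟨([], y), by simp⟩
  | some d => ⟨d.1, d.2.1, Nat.zero_le _, d.2.2.2⟩

lemma optionSplitting_bijective :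
    Function.Bijective (optionSplitting : _ → Splitting 0 y) := by
  constructor
  · rintro (_ | ⟨d, hd⟩) (_ | ⟨d', hd'⟩) h
    · rfl
    · obtain rfl : ([], y) = d' := congrArg Subtype.val h
      exact absurd hd'.2.1 (Nat.not_succ_le_zero 0)
    · obtain rfl : d = ([], y) := congrArg Subtype.val h
      exact absurd hd.2.1 (Nat.not_succ_le_zero 0)
    · obtain rfl : d = d' := congrArg Subtype.val h
      rfl
  · rintro ⟨⟨_ | ⟨m, ms⟩, r⟩, hflat, -, hne⟩
    · exact ⟨none, Subtype.ext (Prod.ext rfl hflat)⟩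
    · exact ⟨some ⟨(m :: ms, r), hflat, by simp, hne⟩, rfl⟩

/-- The splitting of `x` whose first block consists of the first `a` letters of `x`. -/
def consBoundarySplitting (p : Σ a : Fin (x.length + 1), Splitting 1 (x.drop a)) :
    BoundarySplitting x :=
  ⟨(x.take p.1, p.2.1), by
    obtain ⟨hflat, hlen, hne⟩ := p.2.2
    refine ⟨?_, List.ne_nil_of_length_pos hlen, hne⟩
    rw [List.append_assoc, ← hflat, List.take_append_drop]⟩

lemma consBoundarySplitting_bijective :
    Function.Bijective (consBoundarySplitting : _ → BoundarySplitting x) := by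
  constructor
  · rintro ⟨a, d⟩ ⟨a', d'⟩ h
    simp only [consBoundarySplitting, Subtype.mk.injEq, Prod.mk.injEq] at h
    obtain ⟨htake, hd⟩ := h
    obtain rfl : a = a' := by
      have := congrArg List.length htake
      simp only [List.length_take] at this
      omega
    exact congrArg _ (Subtype.ext hd)
  · rintro ⟨⟨l, d⟩, hflat, hmid, hne⟩
    rw [List.append_assoc] at hflat
    subst hflat
    refine ⟨⟨⟨l.length, by simp⟩, d, ?_, List.length_pos_iff.2 hmid, hne⟩, ?_⟩
    · exact List.drop_left
    · simp [consBoundarySplitting]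

lemma finite_splitting (c : ℕ) (y : List A) : Finite (Splitting c y) := by
  induction hn : y.length using Nat.strong_induction_on generalizing c y with
  | _ n ih =>
    have hdrop (c : ℕ) (a : Fin y.length) : Finite (Splitting c (y.drop (a + 1))) :=
      ih _ (by rw [List.length_drop]; omega) c _ rfl
    have hsucc (c : ℕ) : Finite (Splitting (c + 1) y) :=
      Finite.of_surjective _ consSplitting_bijective.surjective
    cases c with
    | zero => exact Finite.of_surjective _ optionSplitting_bijective.surjective
    | succ c => exact hsucc c

instance (c : ℕ) (y : List A) : Fintype (Splitting c y) :=
  have := finite_splitting c y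
  Fintype.ofFinite _

variable (ψ : BL × List A → A ⊕ BR → ℝ) (bR : BR)

/-- The product of the weights `𝐩` of the middle blocks and of the weight `ρ_R` of the last one. -/
def blockWeight (d : List (List A) × List A) : ℝ := (d.1.map (pW ψ)).prod * rhoR ψ d.2 bR

lemma sum_blockWeight_succ (c : ℕ) (y : List A) :
    ∑ d : Splitting (c + 1) y, blockWeight ψ bR d.1 =
      ∑ a : Fin y.length, pW ψ (y.take (a + 1)) *
        ∑ d : Splitting c (y.drop (a + 1)), blockWeight ψ bR d.1 := by
  rw [← consSplitting_bijective.sum_comp, Fintype.sum_sigma]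
  simp only [consSplitting, blockWeight, List.map_cons, List.prod_cons, mul_assoc, Finset.mul_sum]

lemma sum_blockWeight_zero (y : List A) :
    ∑ d : Splitting 0 y, blockWeight ψ bR d.1 =
      rhoR ψ y bR + ∑ d : Splitting 1 y, blockWeight ψ bR d.1 := by
  rw [← optionSplitting_bijective.sum_comp, Fintype.sum_option]
  congr 1
  exact one_mul _

theorem sum_blockWeight (c : ℕ) (y : List A) :
    ∑ d : Splitting c y, blockWeight ψ bR d.1 = wordSumGE ψ bR (c + 1) y := by
  induction hn : y.length using Nat.strong_induction_on generalizing c y with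
  | _ n ih =>
    have hdrop (c : ℕ) (a : Fin y.length) :=
      ih _ (by rw [List.length_drop]; omega) c (y.drop (a + 1)) rfl
    cases c with
    | zero =>
      rw [sum_blockWeight_zero, sum_blockWeight_succ, wordSumGE_succ]
      simp only [hdrop, zero_add, if_true, wordSumGE_one]
    | succ c =>
      rw [sum_blockWeight_succ, wordSumGE_succ, if_neg c.succ_ne_zero, zero_add]
      simp only [hdrop]

end Splittings

end Renewal

open Renewal in
theorem stmt4_general
    {A BL BR : Type*} (w : BL → ℝ) (ψ : BL × List A → A ⊕ BR → ℝ)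
    (bL : BL) (x : List A) (bR : BR) :
    (∑ I : Mem (x.length + 2),
      if 2 ≤ numClusters x.length (memVal I) ∧
          firstClusterLen x.length (memVal I) + lastClusterLen x.length (memVal I) <
            x.length + 2 then
        memW w ψ bL x bR (memVal I)
      else 0) =
    ∑' d : BoundarySplitting x,
      rhoL w ψ bL d.1.1 * ((d.1.2.1.map (pW ψ)).prod) * rhoR ψ d.1.2.2 bR := by
  calc
    _ = sumClustersGE (boundaryWeight w ψ bL x bR) 3 (x.length + 2) := by
      simp only [sumClustersGE, three_le_clusterCount_iff, memProd_boundaryWeight]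
    _ = ∑ a : Fin (x.length + 1), rhoL w ψ bL (x.take a) * wordSumGE ψ bR 2 (x.drop a) :=
      sumClustersGE_boundaryWeight_succ w ψ bL bR 1 x
    _ = ∑ p : Σ a : Fin (x.length + 1), Splitting 1 (x.drop a),
          rhoL w ψ bL (x.take p.1) * blockWeight ψ bR p.2.1 := by
      simp only [Fintype.sum_sigma, ← Finset.mul_sum, sum_blockWeight]
    _ = _ := by
      rw [← (Equiv.ofBijective _ consBoundarySplitting_bijective).tsum_eq, tsum_fintype]
      simp only [Equiv.ofBijective_apply, consBoundarySplitting, blockWeight, mul_assoc]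

open Renewal in
/-- The exact factorization identity: the `Ψ_n`-mass of the event `A` (at least two
clusters, and the first and last cluster lengths sum to less than `n+2`), for a fixed
sequence `b_L ⊔ 𝐱 ⊔ b_R`, equals the sum over all decompositions of the positions into
consecutive blocks of the product `ρ_L · ∏ 𝐩 · ρ_R` of the block weights. -/
theorem stmt4
    {A BL BR : Type*} [Countable A] [Countable BL] [Countable BR]
    (w : BL → ℝ) (ψ : BL × List A → A ⊕ BR → ℝ)
    (hw : ∀ b, 0 ≤ w b) (hψ : ∀ b s, 0 ≤ ψ b s)
    (n : ℕ) (hn : 1 ≤ n) (bL : BL) (x : List A) (hx : x.length = n) (bR : BR) :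
    (∑ I : Mem (n + 2),
      if 2 ≤ numClusters n (memVal I) ∧
          firstClusterLen n (memVal I) + lastClusterLen n (memVal I) < n + 2 then
        memW w ψ bL x bR (memVal I)
      else 0) =
    ∑' d : {d : List A × List (List A) × List A //
        x = d.1 ++ d.2.1.flatten ++ d.2.2 ∧ d.2.1 ≠ [] ∧ ∀ m ∈ d.2.1, m ≠ []},
      rhoL w ψ bL d.1.1 * ((d.1.2.1.map (pW ψ)).prod) * rhoR ψ d.1.2.2 bR := by
  subst hx
  exact stmt4_general w ψ bL x bR
end
end

section
/- Assume hypotheses (H1), (H2) and (H4), with constants K from (H1), L₀ and c from (H2), and ε₀ from (H4). Then for every word 𝐱 = 𝐱_1^n and every b ∈ B̄_L: Σ_{s ∈ 𝒜} a_n(s | 𝐱_1^n) ≥ (1 − e^{−c n}) · Σ_{s ∈ 𝒜} Ψ(s | b ⊔ 𝐱_1^n) whenever n ≥ L₀, and Σ_{s ∈ 𝒜} a_n(s | 𝐱_1^n) ≥ (ε₀/K) · Σ_{s ∈ 𝒜} Ψ(s | b ⊔ 𝐱_1^n) for every n, where a_n(s | 𝐱_1^n) = inf_{l ∈ B̄_L}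 Ψ(s | l ⊔ 𝐱_1^n). -/
noncomputable section
open scoped Classical BigOperators

/-!
Every lower bound on `Ψ(s | l ⊔ 𝐱)` that is uniform in the context `l` passes to the infimum
`a_n(s | 𝐱)`, and then to the sum over letters. Mixing supplies, for each letter `s`, the bound
`(1 - e^{-cn}) Ψ(s | b ⊔ 𝐱)`. The letter `s₀` of (H4) alone contributes at least `ε₀` to the sum of
the infima, while the sum of the `Ψ(s | b ⊔ 𝐱)` is at most `K`.
-/

namespace Renewal

section Infimum

variable {ι α : Type*} {f : ι → α → ℝ}

theorem iInf_apply_le_of_nonneg (hf : ∀ i a, 0 ≤ f i a) (i : ι) (a : α) :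
    ⨅ j, f j a ≤ f i a :=
  ciInf_le ⟨0, Set.forall_mem_range.2 fun j => hf j a⟩ i

theorem summable_iInf_of_nonneg (hf : ∀ i a, 0 ≤ f i a) {i : ι} (hi : Summable (f i)) :
    Summable fun a => ⨅ j, f j a :=
  hi.of_nonneg_of_le (fun a => Real.iInf_nonneg fun j => hf j a) (iInf_apply_le_of_nonneg hf i)

theorem mul_tsum_le_tsum_iInf (hf : ∀ i a, 0 ≤ f i a) {i : ι} (hi : Summable (f i)) {r : ℝ}
    (hr : ∀ j a, r * f i a ≤ f j a) :
    r * ∑' a, f i a ≤ ∑' a, ⨅ j, f j a := by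
  have : Nonempty ι := ⟨i⟩
  rw [← tsum_mul_left]
  exact (hi.mul_left r).tsum_le_tsum (fun a => le_ciInf fun j => hr j a)
    (summable_iInf_of_nonneg hf hi)

theorem le_tsum_iInf_of_forall_le (hf : ∀ i a, 0 ≤ f i a) {i : ι} (hi : Summable (f i))
    {a₀ : α} {ε : ℝ} (hle : ∀ j, ε ≤ f j a₀) :
    ε ≤ ∑' a, ⨅ j, f j a := by
  have : Nonempty ι := ⟨i⟩
  calc ε ≤ ⨅ j, f j a₀ := le_ciInf hle
    _ ≤ ∑' a, ⨅ j, f j a := (summable_iInf_of_nonneg hf hi).le_tsum a₀ fun a _ =>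
        Real.iInf_nonneg fun j => hf j a

theorem div_mul_tsum_le_tsum_iInf (hf : ∀ i a, 0 ≤ f i a) {i : ι} (hi : Summable (f i))
    {a₀ : α} {ε K : ℝ} (hε : 0 ≤ ε) (hle : ∀ j, ε ≤ f j a₀) (hK : ∑' a, f i a ≤ K) :
    ε / K * ∑' a, f i a ≤ ∑' a, ⨅ j, f j a := by
  have mass_nonneg : 0 ≤ ∑' a, f i a := tsum_nonneg (hf i)
  calc ε / K * ∑' a, f i a = ε * ((∑' a, f i a) / K) := by ring
    _ ≤ ε := mul_le_of_le_one_right hε (div_le_one_of_le₀ hK (mass_nonneg.trans hK))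
    _ ≤ ∑' a, ⨅ j, f j a := le_tsum_iInf_of_forall_le hf hi hle

end Infimum

theorem one_sub_mul_le_of_abs_one_sub_div_le {x y δ : ℝ} (hx : 0 ≤ x) (hy : 0 ≤ y)
    (h : |1 - y / x| ≤ δ) : (1 - δ) * x ≤ y := by
  rcases hx.eq_or_lt with rfl | hx
  · rwa [mul_zero]
  · rw [← le_div_iff₀ hx]
    exact sub_le_comm.1 ((le_abs_self _).trans h)

variable {A BL BR : Type*} (ψ : BL × List A → A ⊕ BR → ℝ)

theorem psiExt_singleton (b : BL × List A) (s : A) :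
    psiExt ψ b (Sum.inl [s]) = ψ b (Sum.inl s) := by
  simp [psiExt]

theorem aW_length (y : List A) (s : A ⊕ BR) :
    aW ψ y y.length s = ⨅ l : BL × List A, ψ (l.1, l.2 ++ y) s := by
  simp only [aW, Nat.sub_self, List.drop_zero]

end Renewal

open Renewal in
/-- Under (H1), (H2) and (H4): the total mass of the full-depth infima `a_n(· | 𝐱)` over
the letters is comparable to that of `Ψ(· | b ⊔ 𝐱)`, uniformly in the context `b`. -/
theorem stmt19
    {A BL BR : Type*} [Countable A] [Nonempty BL]
    (ψ : BL × List A → A ⊕ BR → ℝ) (hψ : ∀ b s, 0 ≤ ψ b s)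
    -- (H1): uniform summability
    (K : ℝ) (hsum : ∀ b : BL × List A, Summable fun s : A ⊕ BR => ψ b s)
    (hK : ∀ b : BL × List A, ∑' s : A ⊕ BR, ψ b s ≤ K)
    -- (H2): ratio exponential mixing
    (L₀ : ℕ) (c : ℝ) (hc : 0 < c)
    (hmix : ∀ x : List A, L₀ ≤ x.length → ∀ (z : List A ⊕ BR) (b₁ b₂ : BL × List A),
      |1 - psiExt ψ (b₂.1, b₂.2 ++ x) z / psiExt ψ (b₁.1, b₁.2 ++ x) z| ≤
        Real.exp (-c * x.length))
    -- (H4)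
    (s₀ : A) (ε₀ : ℝ) (hε₀ : 0 < ε₀) (hinf : ∀ b : BL × List A, ε₀ ≤ ψ b (Sum.inl s₀)) :
    ∀ (x : List A) (b : BL × List A),
      (L₀ ≤ x.length →
        (1 - Real.exp (-c * x.length)) * (∑' s : A, ψ (b.1, b.2 ++ x) (Sum.inl s)) ≤
          ∑' s : A, aW ψ x x.length (Sum.inl s)) ∧
      (ε₀ / K) * (∑' s : A, ψ (b.1, b.2 ++ x) (Sum.inl s)) ≤
        ∑' s : A, aW ψ x x.length (Sum.inl s) := by
  intro x b
  have hf : ∀ (l : BL × List A) (s : A), 0 ≤ ψ (l.1, l.2 ++ x) (Sum.inl s) := fun l s => hψ _ _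
  have hb : Summable fun s : A => ψ (b.1, b.2 ++ x) (Sum.inl s) :=
    (hsum _).comp_injective Sum.inl_injective
  simp only [aW_length]
  constructor
  · intro hx
    refine mul_tsum_le_tsum_iInf hf hb fun l s =>
      one_sub_mul_le_of_abs_one_sub_div_le (hf b s) (hf l s) ?_
    simpa only [psiExt_singleton] using hmix x hx (Sum.inl [s]) b l
  · have letter_mass_le : ∑' s : A, ψ (b.1, b.2 ++ x) (Sum.inl s) ≤ K :=
      (tsum_comp_le_tsum_of_inj (hsum _) (hψ _) Sum.inl_injective).trans (hK _)
    exact div_mul_tsum_le_tsum_iInf hf hb hε₀.le (fun l => hinf _) letter_mass_le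
end
end
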